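/- Let λ be a real number with λ ≥ 2 and let n be a natural number with n ≥ 3. Then the best Markov constant c_n(λ) satisfies n²(n+λ)²/(4(λ+1)(λ+2)) < (c_n(λ))² < n(n+2λ+2)³/((λ+2)(λ+3)). -/

import Mathlib

open Polynomial Filter

/-- The weighted `L_2` norm with the Gegenbauer weight `w_lam(t) = (1-t^2)^(lam-1/2)`. -/
noncomputable def gegNorm (lam : ℝ) (f : ℝ → ℝ) : ℝ :=
  (∫ x in (-1:ℝ)..1, (f x) ^ 2 * (1 - x ^ 2) ^ (lam - 1/2)) ^ ((1:ℝ)/2)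

/-- The best Markov constant `c_n(lam)` in `‖p'‖ ≤ c_n(lam) ‖p‖` for polynomials of degree ≤ n. -/
noncomputable def markovConst (lam : ℝ) (n : ℕ) : ℝ :=
  sSup { r : ℝ | ∃ p : Polynomial ℝ, p ≠ 0 ∧ p.natDegree ≤ n ∧
    r = gegNorm lam (fun x => (Polynomial.derivative p).eval x) /
        gegNorm lam (fun x => p.eval x) }

/-!
Write `p' = ∑ m < n, 2 (m + lam) S_m C_m^(lam)`. Since
`(C_{m+1}^(lam))' - (C_{m-1}^(lam))' = 2 (m + lam) C_m^(lam)`, the coefficient of `C_{m+1}^(lam)` in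
`p` is `S_m - S_{m+2}`. With `g_m = (m + lam) ‖C_m^(lam)‖²`, orthogonality therefore makes
`c_n(lam)²` the best constant `K` in the discrete Hardy inequality
`∑ 4 (m + lam) g_m S_m² ≤ K ∑ g_{m+1} / (m + 1 + lam) (S_m - S_{m+2})²` for sequences vanishing from
`n` on, where `(m + 1) g_{m+1} = (m + 2 lam) g_m`. Picone's inequality against an explicit positive
supersolution bounds `K` from above by a quartic in `n`, and testing with
`S_m = n (n + 2 lam) - m (m + 2 lam)` bounds it from below.
-/

lemma sum_range_add_eq_sum_range {M : Type*} [AddCommMonoid M] {F : ℕ → M} {n d : ℕ}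
    (hlow : ∀ m < d, F m = 0) (hhigh : ∀ m, n ≤ m → F m = 0) :
    ∑ m ∈ Finset.range n, F (m + d) = ∑ m ∈ Finset.range n, F m := by
  have hleft : ∑ m ∈ Finset.range (d + n), F m = ∑ m ∈ Finset.range n, F (m + d) := by
    rw [Finset.sum_range_add, Finset.sum_eq_zero fun m hm => hlow m (Finset.mem_range.1 hm),
      zero_add]
    simp only [add_comm]
  have hright : ∑ m ∈ Finset.range (n + d), F m = ∑ m ∈ Finset.range n, F m := by
    rw [Finset.sum_range_add, Finset.sum_eq_zero fun m _ => hhigh (n + m) (Nat.le_add_right n m),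
      add_zero]
  rw [← hleft, add_comm d, hright]

section Gegenbauer

variable {K : Type*} [Field K]

/-- The Gegenbauer polynomial `C_k^(lam)`, encoded by its three-term recurrence. -/
noncomputable def gegenbauer (lam : K) : ℕ → K[X]
  | 0 => 1
  | 1 => C (2 * lam) * X
  | k + 2 => C (1 / ((k : K) + 2)) * (2 * ((k : K[X]) + 1 + C lam) * X * gegenbauer lam (k + 1)
      - ((k : K[X]) + 2 * C lam) * gegenbauer lam k)

lemma natDegree_gegenbauer_le (lam : K) (k : ℕ) : (gegenbauer lam k).natDegree ≤ k := by
  induction k using Nat.twoStepInduction with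
  | zero => simp only [gegenbauer, natDegree_one, le_refl]
  | one => simpa only [gegenbauer, pow_one] using natDegree_C_mul_X_pow_le (2 * lam) 1
  | more k ih₀ ih₁ =>
    rw [gegenbauer]
    compute_degree
    all_goals omega

/-- The primitive of `∑ m < n, 2 (m + lam) S_m C_m^(lam)` without constant term in its Gegenbauer
expansion, provided that `S` vanishes from `n` on. -/
noncomputable def gegenbauerPrimitive (lam : K) (n : ℕ) (S : ℕ → K) : K[X] :=
  ∑ m ∈ Finset.range n, (S m - S (m + 2)) • gegenbauer lam (m + 1)

lemma natDegree_gegenbauerPrimitive_le (lam : K) (n : ℕ) (S : ℕ → K) :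
    (gegenbauerPrimitive lam n S).natDegree ≤ n :=
  natDegree_sum_le_of_forall_le _ _ fun m hm =>
    (natDegree_smul_le _ _).trans
      ((natDegree_gegenbauer_le lam (m + 1)).trans (Finset.mem_range.1 hm))

variable [CharZero K]

lemma gegenbauer_recurrence (lam : K) (k : ℕ) :
    ((k : K[X]) + 2) * gegenbauer lam (k + 2) =
      2 * ((k : K[X]) + 1 + C lam) * X * gegenbauer lam (k + 1)
      - ((k : K[X]) + 2 * C lam) * gegenbauer lam k := by
  have hk : (k : K) + 2 ≠ 0 := by exact_mod_cast (k + 1).succ_ne_zero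
  have hC : ((k : K[X]) + 2) * C (1 / ((k : K) + 2)) = 1 := by
    rw [show (k : K[X]) + 2 = C ((k : K) + 2) by simp only [map_add, map_natCast, map_ofNat],
      ← C_mul, mul_one_div_cancel hk, C_1]
  rw [gegenbauer, ← mul_assoc, hC, one_mul]

lemma coeff_gegenbauer_succ (lam : K) (k : ℕ) :
    ((k : K) + 1) * (gegenbauer lam (k + 1)).coeff (k + 1) =
      2 * (k + lam) * (gegenbauer lam k).coeff k := by
  cases k with
  | zero => simp [gegenbauer]
  | succ k =>
    have hzero : (gegenbauer lam k).coeff (k + 2) = 0 :=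
      coeff_eq_zero_of_natDegree_lt ((natDegree_gegenbauer_le lam k).trans_lt (by omega))
    have hrec : C ((k : K) + 2) * gegenbauer lam (k + 2) =
        C (2 * ((k : K) + 1 + lam)) * (X * gegenbauer lam (k + 1))
          - C ((k : K) + 2 * lam) * gegenbauer lam k := by
      simp only [map_mul, map_add, map_natCast, map_one, map_ofNat]
      linear_combination gegenbauer_recurrence lam k
    have hcoeff := congrArg (coeff · (k + 2)) hrec
    simp only [coeff_sub, coeff_C_mul, coeff_X_mul, hzero, mul_zero, sub_zero] at hcoeff
    push_cast
    linear_combination hcoeff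

lemma degree_gegenbauer {lam : K} (hlam : ∀ k : ℕ, (k : K) + lam ≠ 0) (k : ℕ) :
    (gegenbauer lam k).degree = k := by
  have hcoeff : (gegenbauer lam k).coeff k ≠ 0 := by
    induction k with
    | zero => simp [gegenbauer]
    | succ k ih =>
      have h : 2 * (k + lam) * (gegenbauer lam k).coeff k ≠ 0 :=
        mul_ne_zero (mul_ne_zero two_ne_zero (hlam k)) ih
      rw [← coeff_gegenbauer_succ] at h
      exact right_ne_zero_of_mul h
  exact degree_eq_of_le_of_coeff_ne_zero
    (degree_le_of_natDegree_le (natDegree_gegenbauer_le lam k)) hcoeff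

lemma exists_sum_smul_gegenbauer_eq {lam : K} (hlam : ∀ k : ℕ, (k : K) + lam ≠ 0) {n : ℕ}
    {p : K[X]} (hp : p.degree < n) :
    ∃ a : ℕ → K, ∑ k ∈ Finset.range n, a k • gegenbauer lam k = p := by
  let S : Polynomial.Sequence K := ⟨gegenbauer lam, degree_gegenbauer hlam⟩
  have hspan := S.span_degreeLT (m := n) fun i _ =>
    (leadingCoeff_ne_zero.2 (S.ne_zero i)).isUnit
  rw [← mem_degreeLT, ← hspan, ← Finset.coe_range,
    Submodule.mem_span_image_finset_iff_exists_fun'] at hp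
  exact hp

lemma derivative_gegenbauer_pair (lam : K) (k : ℕ) :
    derivative (gegenbauer lam (k + 1)) - X * derivative (gegenbauer lam k) =
        ((k : K[X]) + 2 * C lam) * gegenbauer lam k ∧
    X * derivative (gegenbauer lam (k + 1)) - derivative (gegenbauer lam k) =
        ((k : K[X]) + 1) * gegenbauer lam (k + 1) := by
  induction k with
  | zero => simp [gegenbauer, map_ofNat C 2]; ring
  | succ k ih =>
    obtain ⟨hA, hB⟩ := ih
    have hrec := gegenbauer_recurrence lam k
    have hder := congrArg derivative hrec
    simp only [derivative_mul, derivative_add, derivative_sub, derivative_natCast,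
      derivative_C, derivative_X, derivative_ofNat, derivative_one] at hder
    have hk : (k : K[X]) + 2 ≠ 0 := by exact_mod_cast (k + 1).succ_ne_zero
    have hA' : derivative (gegenbauer lam (k + 2)) - X * derivative (gegenbauer lam (k + 1)) =
        ((k : K[X]) + 1 + 2 * C lam) * gegenbauer lam (k + 1) := by
      apply mul_left_cancel₀ hk
      linear_combination hder + ((k : K[X]) + 2 * C lam) * hB
    push_cast
    exact ⟨hA', by linear_combination X * hA' - hrec - hA + X * hB⟩

lemma derivative_gegenbauer_succ_sub (lam : K) (k : ℕ) :
    derivative (gegenbauer lam (k + 1)) - derivative (gegenbauer lam (k - 1)) =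
      (2 * ((k : K) + lam)) • gegenbauer lam k := by
  simp only [smul_eq_C_mul, map_mul, map_add, map_natCast, map_ofNat]
  cases k with
  | zero => simp [gegenbauer, map_ofNat C 2]
  | succ k =>
    have hA := (derivative_gegenbauer_pair lam (k + 1)).1
    have hB := (derivative_gegenbauer_pair lam k).2
    push_cast at *
    linear_combination hA + hB

lemma gegenbauer_differential_equation (lam : K) (k : ℕ) :
    (1 - X ^ 2) * derivative (derivative (gegenbauer lam k)) -
      (2 * C lam + 1) * X * derivative (gegenbauer lam k) =
      - C ((k : K) * (k + 2 * lam)) * gegenbauer lam k := by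
  cases k with
  | zero => simp [gegenbauer]
  | succ k =>
    obtain ⟨hA, hB⟩ := derivative_gegenbauer_pair lam k
    have hfirst : (1 - X ^ 2) * derivative (gegenbauer lam (k + 1)) =
        ((k : K[X]) + 2 * C lam) * gegenbauer lam k
          - ((k : K[X]) + 1) * X * gegenbauer lam (k + 1) := by
      linear_combination hA - X * hB
    have hder := congrArg derivative hfirst
    simp only [derivative_mul, derivative_add, derivative_sub, derivative_natCast, derivative_X_pow,
      derivative_C, derivative_X, derivative_ofNat, derivative_one] at hder
    simp only [Nat.cast_add, Nat.cast_one, map_mul, map_add, map_natCast, map_one, map_ofNat,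
      Nat.add_one_sub_one, pow_one, Nat.cast_ofNat] at hder ⊢
    linear_combination hder - ((k : K[X]) + 2 * C lam) * hB

lemma derivative_gegenbauerPrimitive (lam : K) {n : ℕ} {S : ℕ → K} (hS : ∀ m, n ≤ m → S m = 0) :
    derivative (gegenbauerPrimitive lam n S) =
      ∑ m ∈ Finset.range n, (2 * ((m : K) + lam) * S m) • gegenbauer lam m := by
  have hshift : ∑ m ∈ Finset.range n, S (m + 2) • derivative (gegenbauer lam (m + 1)) =
      ∑ m ∈ Finset.range n, S m • derivative (gegenbauer lam (m - 1)) := by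
    refine sum_range_add_eq_sum_range (F := fun m => S m • derivative (gegenbauer lam (m - 1)))
      (d := 2) (fun m hm => ?_) fun m hm => ?_
    · rw [Nat.sub_eq_zero_of_le (Nat.le_of_lt_succ hm), gegenbauer, derivative_one, smul_zero]
    · rw [hS m hm, zero_smul]
  calc derivative (gegenbauerPrimitive lam n S)
      = ∑ m ∈ Finset.range n, S m • derivative (gegenbauer lam (m + 1)) -
          ∑ m ∈ Finset.range n, S (m + 2) • derivative (gegenbauer lam (m + 1)) := by
        simp only [gegenbauerPrimitive, derivative_sum, derivative_smul, derivative_sub, sub_smul,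
          ← Finset.sum_sub_distrib]
    _ = ∑ m ∈ Finset.range n, (2 * ((m : K) + lam) * S m) • gegenbauer lam m := by
        rw [hshift, ← Finset.sum_sub_distrib]
        refine Finset.sum_congr rfl fun m _ => ?_
        rw [← smul_sub, derivative_gegenbauer_succ_sub, smul_smul, mul_comm (S m)]

lemma exists_eq_C_add_gegenbauerPrimitive {lam : K} (hlam : ∀ k : ℕ, (k : K) + lam ≠ 0) {n : ℕ}
    {p : K[X]} (hp : p.natDegree ≤ n) :
    ∃ c S, (∀ m, n ≤ m → S m = 0) ∧ p = C c + gegenbauerPrimitive lam n S := by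
  have hdeg : (derivative p).degree < n := by
    rcases eq_or_ne p 0 with rfl | hp0
    · rw [derivative_zero, degree_zero]; exact WithBot.bot_lt_coe n
    · exact (degree_derivative_lt hp0).trans_le (degree_le_of_natDegree_le hp)
  obtain ⟨b, hb⟩ := exists_sum_smul_gegenbauer_eq hlam hdeg
  let S : ℕ → K := fun m => if m < n then b m / (2 * (m + lam)) else 0
  have hS : ∀ m, n ≤ m → S m = 0 := fun m hm => if_neg hm.not_gt
  have hder : derivative (p - gegenbauerPrimitive lam n S) = 0 := by
    rw [derivative_sub, derivative_gegenbauerPrimitive lam hS, ← hb, sub_eq_zero]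
    refine Finset.sum_congr rfl fun m hm => ?_
    simp only [S, if_pos (Finset.mem_range.1 hm)]
    rw [mul_div_cancel₀ _ (mul_ne_zero two_ne_zero (hlam m))]
  refine ⟨(p - gegenbauerPrimitive lam n S).coeff 0, S, hS, ?_⟩
  rw [← eq_C_of_derivative_eq_zero hder, sub_add_cancel]

end Gegenbauer

section Integral

lemma intervalIntegrable_one_sub_sq_rpow {s : ℝ} (hs : -1 < s) :
    IntervalIntegrable (fun x : ℝ => (1 - x ^ 2) ^ s) MeasureTheory.volume (-1) 1 := by
  have hone : IntervalIntegrable (fun x : ℝ => (1 - x) ^ s) MeasureTheory.volume 0 1 := by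
    simpa only [sub_zero, sub_self] using
      ((intervalIntegral.intervalIntegrable_rpow' (a := 0) (b := 1) hs).comp_sub_left 1).symm
  have hcont : ContinuousOn (fun x : ℝ => (1 + x) ^ s) (Set.uIcc 0 1) := by
    refine (continuousOn_const.add continuousOn_id).rpow_const fun x hx => Or.inl ?_
    rw [Set.uIcc_of_le zero_le_one] at hx
    exact (add_pos_of_pos_of_nonneg one_pos hx.1).ne'
  have hright : IntervalIntegrable (fun x : ℝ => (1 - x ^ 2) ^ s) MeasureTheory.volume 0 1 := by
    refine (hone.mul_continuousOn hcont).congr fun x hx => ?_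
    rw [Set.uIoc_of_le zero_le_one] at hx
    change (1 - x) ^ s * (1 + x) ^ s = (1 - x ^ 2) ^ s
    rw [← Real.mul_rpow (by linarith [hx.2]) (by linarith [hx.1])]
    ring_nf
  have hleft : IntervalIntegrable (fun x : ℝ => (1 - x ^ 2) ^ s) MeasureTheory.volume (-1) 0 := by
    rw [IntervalIntegrable.iff_comp_neg]
    simpa only [neg_neg, neg_zero, even_two.neg_pow] using hright.symm
  exact hleft.trans hright

lemma intervalIntegrable_eval_mul_one_sub_sq_rpow {s : ℝ} (hs : -1 < s) (p : ℝ[X]) :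
    IntervalIntegrable (fun x : ℝ => p.eval x * (1 - x ^ 2) ^ s) MeasureTheory.volume (-1) 1 :=
  (intervalIntegrable_one_sub_sq_rpow hs).continuousOn_mul p.continuous.continuousOn

/-- The integral of a polynomial against the Gegenbauer weight `(1 - x ^ 2) ^ (lam - 1 / 2)`, as a
linear functional; it is set to `0` for `lam ≤ -1 / 2`, where the weight is not integrable. -/
noncomputable def gegIntegral (lam : ℝ) : ℝ[X] →ₗ[ℝ] ℝ :=
  open Classical in
  if hlam : -1 / 2 < lam then
    { toFun p := ∫ x in (-1 : ℝ)..1, p.eval x * (1 - x ^ 2) ^ (lam - 1 / 2)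
      map_add' p q := by
        have hs : -1 < lam - 1 / 2 := by linarith
        simp only [eval_add, add_mul]
        exact intervalIntegral.integral_add (intervalIntegrable_eval_mul_one_sub_sq_rpow hs p)
          (intervalIntegrable_eval_mul_one_sub_sq_rpow hs q)
      map_smul' c p := by
        simp only [eval_smul, smul_eq_mul, mul_assoc, intervalIntegral.integral_const_mul,
          RingHom.id_apply] }
  else 0

variable {lam : ℝ}

lemma gegIntegral_apply (hlam : -1 / 2 < lam) (p : ℝ[X]) :
    gegIntegral lam p = ∫ x in (-1 : ℝ)..1, p.eval x * (1 - x ^ 2) ^ (lam - 1 / 2) := by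
  rw [gegIntegral, dif_pos hlam]
  rfl

lemma gegIntegral_sq_pos (hlam : -1 / 2 < lam) {p : ℝ[X]} (hp : p ≠ 0) :
    0 < gegIntegral lam (p ^ 2) := by
  have hs : -1 < lam - 1 / 2 := by linarith
  have hweight : ∀ x ∈ Set.Ioo (-1 : ℝ) 1, 0 < (1 - x ^ 2) ^ (lam - 1 / 2) := fun x hx =>
    Real.rpow_pos_of_pos (by nlinarith [hx.1, hx.2]) _
  have hnonneg : 0 ≤ᵐ[MeasureTheory.volume.restrict (Set.uIoc (-1) 1)]
      fun x => (p ^ 2).eval x * (1 - x ^ 2) ^ (lam - 1 / 2) := by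
    refine MeasureTheory.ae_restrict_of_forall_mem measurableSet_uIoc fun x hx => ?_
    rw [Set.uIoc_of_le (by norm_num)] at hx
    simp only [Pi.zero_apply, eval_pow]
    exact mul_nonneg (sq_nonneg _) (Real.rpow_nonneg (by nlinarith [hx.1, hx.2]) _)
  have hsupport : Set.Ioo (-1 : ℝ) 1 \ p.roots.toFinset ⊆
      Function.support (fun x => (p ^ 2).eval x * (1 - x ^ 2) ^ (lam - 1 / 2)) ∩
        Set.Ioc (-1) 1 := by
    rintro x ⟨hx, hroot⟩
    rw [Finset.mem_coe, Multiset.mem_toFinset, mem_roots hp] at hroot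
    refine ⟨mul_ne_zero ?_ (hweight x hx).ne', Set.Ioo_subset_Ioc_self hx⟩
    rw [eval_pow]
    exact pow_ne_zero 2 hroot
  rw [gegIntegral_apply hlam, intervalIntegral.integral_pos_iff_support_of_nonneg_ae' hnonneg
    (intervalIntegrable_eval_mul_one_sub_sq_rpow hs _)]
  refine ⟨by norm_num, lt_of_lt_of_le ?_ (MeasureTheory.measure_mono hsupport)⟩
  rw [MeasureTheory.measure_sdiff_null (Finset.measure_zero _ _), Real.volume_Ioo]
  norm_num

lemma gegIntegral_total_derivative (hlam : -1 / 2 < lam) (p : ℝ[X]) :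
    gegIntegral lam ((1 - X ^ 2) * derivative p - (2 * C lam + 1) * X * p) = 0 := by
  have hs : -1 < lam - 1 / 2 := by linarith
  have hcont :
      ContinuousOn (fun x : ℝ => p.eval x * (1 - x ^ 2) ^ (lam + 1 / 2)) (Set.Icc (-1) 1) :=
    p.continuous.continuousOn.mul <|
      (continuous_const.sub (continuous_pow 2)).continuousOn.rpow_const
        fun x _ => Or.inr (by linarith)
  have hderiv : ∀ x ∈ Set.Ioo (-1 : ℝ) 1,
      HasDerivAt (fun x : ℝ => p.eval x * (1 - x ^ 2) ^ (lam + 1 / 2))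
        (((1 - X ^ 2) * derivative p - (2 * C lam + 1) * X * p).eval x *
          (1 - x ^ 2) ^ (lam - 1 / 2)) x := by
    intro x hx
    have hpos : 0 < 1 - x ^ 2 := by nlinarith [hx.1, hx.2]
    have hweight := ((hasDerivAt_pow 2 x).const_sub 1).rpow_const (p := lam + 1 / 2)
      (Or.inl hpos.ne')
    refine ((p.hasDerivAt x).mul hweight).congr_deriv ?_
    have hexp : lam + 1 / 2 = lam - 1 / 2 + 1 := by ring
    rw [hexp, add_sub_cancel_right, Real.rpow_add_one hpos.ne']
    simp only [eval_sub, eval_mul, eval_add, eval_one, eval_pow, eval_X, eval_C, eval_ofNat]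
    push_cast
    ring
  rw [gegIntegral_apply hlam, intervalIntegral.integral_eq_sub_of_hasDerivAt_of_le (by norm_num)
    hcont hderiv (intervalIntegrable_eval_mul_one_sub_sq_rpow hs _)]
  have : lam + 1 / 2 ≠ 0 := by linarith
  norm_num [Real.zero_rpow this]

lemma gegIntegral_sq_nonneg (hlam : -1 / 2 < lam) (p : ℝ[X]) : 0 ≤ gegIntegral lam (p ^ 2) := by
  rcases eq_or_ne p 0 with rfl | hp
  · rw [zero_pow two_ne_zero, map_zero]
  · exact (gegIntegral_sq_pos hlam hp).le

/-- The Wronskian of two eigenfunctions of a Sturm–Liouville operator is a total derivative. -/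
lemma gegIntegral_gegenbauer_mul_eq_zero (hlam : -1 / 2 < lam) {j k : ℕ} (hjk : j ≠ k) :
    gegIntegral lam (gegenbauer lam j * gegenbauer lam k) = 0 := by
  have hwronskian := gegIntegral_total_derivative hlam
    (derivative (gegenbauer lam j) * gegenbauer lam k -
      gegenbauer lam j * derivative (gegenbauer lam k))
  have hfactor : (1 - X ^ 2) * derivative (derivative (gegenbauer lam j) * gegenbauer lam k -
        gegenbauer lam j * derivative (gegenbauer lam k)) -
      (2 * C lam + 1) * X * (derivative (gegenbauer lam j) * gegenbauer lam k -
        gegenbauer lam j * derivative (gegenbauer lam k)) =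
      (((k : ℝ) - j) * (k + j + 2 * lam)) • (gegenbauer lam j * gegenbauer lam k) := by
    have hj := gegenbauer_differential_equation lam j
    have hk := gegenbauer_differential_equation lam k
    simp only [smul_eq_C_mul, derivative_mul, map_mul, map_add, map_sub,
      map_natCast, map_ofNat] at hj hk ⊢
    linear_combination gegenbauer lam k * hj - gegenbauer lam j * hk
  rw [hfactor, map_smul, smul_eq_mul] at hwronskian
  have hsum : (1 : ℝ) ≤ k + j := by exact_mod_cast (by omega : 1 ≤ k + j)
  have hsub : (k : ℝ) - j ≠ 0 := sub_ne_zero.2 (by exact_mod_cast hjk.symm)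
  exact (mul_eq_zero.1 hwronskian).resolve_left (mul_ne_zero hsub (by linarith))

lemma gegIntegral_X_mul_gegenbauer_mul_succ (hlam : -1 / 2 < lam) (k : ℕ) :
    2 * (k + 1 + lam) * gegIntegral lam (X * gegenbauer lam (k + 1) * gegenbauer lam k) =
      (k + 2 * lam) * gegIntegral lam (gegenbauer lam k ^ 2) := by
  have hrec : (2 * ((k : ℝ) + 1 + lam)) • (X * gegenbauer lam (k + 1) * gegenbauer lam k) =
      ((k : ℝ) + 2) • (gegenbauer lam (k + 2) * gegenbauer lam k) +
        ((k : ℝ) + 2 * lam) • gegenbauer lam k ^ 2 := by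
    simp only [smul_eq_C_mul, map_mul, map_add, map_natCast, map_one, map_ofNat]
    linear_combination -gegenbauer lam k * gegenbauer_recurrence lam k
  have h := congrArg (gegIntegral lam) hrec
  rwa [map_add, map_smul, map_smul, map_smul, gegIntegral_gegenbauer_mul_eq_zero hlam (by omega),
    smul_zero, zero_add] at h

lemma gegIntegral_gegenbauer_succ_sq (hlam : -1 / 2 < lam) (k : ℕ) :
    (k + 1) * gegIntegral lam (gegenbauer lam (k + 1) ^ 2) =
      2 * (k + lam) * gegIntegral lam (X * gegenbauer lam (k + 1) * gegenbauer lam k) := by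
  cases k with
  | zero =>
    have hone : gegenbauer lam 1 ^ 2 = (2 * lam) • (X * gegenbauer lam 1 * gegenbauer lam 0) := by
      rw [gegenbauer, gegenbauer, smul_eq_C_mul]; ring
    simp [hone]
  | succ k =>
    have hrec : ((k : ℝ) + 2) • gegenbauer lam (k + 2) ^ 2 =
        (2 * ((k : ℝ) + 1 + lam)) • (X * gegenbauer lam (k + 2) * gegenbauer lam (k + 1)) -
          ((k : ℝ) + 2 * lam) • (gegenbauer lam k * gegenbauer lam (k + 2)) := by
      simp only [smul_eq_C_mul, map_mul, map_add, map_natCast, map_one, map_ofNat]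
      linear_combination gegenbauer lam (k + 2) * gegenbauer_recurrence lam k
    have h := congrArg (gegIntegral lam) hrec
    rw [map_sub, map_smul, map_smul, map_smul, gegIntegral_gegenbauer_mul_eq_zero hlam (by omega),
      smul_zero, sub_zero] at h
    push_cast
    simpa only [smul_eq_mul, add_assoc, one_add_one_eq_two] using h

end Integral

lemma map_sum_smul_sq {R A ι : Type*} [CommSemiring R] [CommSemiring A] [Algebra R A]
    (L : A →ₗ[R] R) {f : ι → A} (hf : Pairwise fun i j => L (f i * f j) = 0) (a : ι → R)
    (s : Finset ι) :
    L ((∑ i ∈ s, a i • f i) ^ 2) = ∑ i ∈ s, a i ^ 2 * L (f i ^ 2) := by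
  rw [sq, Finset.sum_mul_sum, map_sum]
  refine Finset.sum_congr rfl fun i hi => ?_
  rw [map_sum, Finset.sum_eq_single_of_mem i hi]
  · rw [smul_mul_smul_comm, map_smul, smul_eq_mul, sq, sq]
  · intro j _ hji
    rw [smul_mul_smul_comm, map_smul, hf hji.symm, smul_zero]

section Weight

variable {lam : ℝ}

/-- The squared norm of `C_k^(lam)` times `k + lam`; this normalisation turns the recurrence of the
squared norms into the two-term recurrence of the binomial coefficients `(2 lam)_k / k!`. -/
noncomputable def gegenbauerWeight (lam : ℝ) (k : ℕ) : ℝ :=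
  (k + lam) * gegIntegral lam (gegenbauer lam k ^ 2)

lemma gegenbauerWeight_succ (hlam : -1 / 2 < lam) (k : ℕ) :
    (k + 1) * gegenbauerWeight lam (k + 1) = (k + 2 * lam) * gegenbauerWeight lam k := by
  have hnorm := gegIntegral_gegenbauer_succ_sq hlam k
  have hmixed := gegIntegral_X_mul_gegenbauer_mul_succ hlam k
  rw [gegenbauerWeight, gegenbauerWeight]
  push_cast
  linear_combination (k + 1 + lam) * hnorm + (k + lam) * hmixed

lemma gegenbauerWeight_pos (hlam : 0 < lam) (k : ℕ) : 0 < gegenbauerWeight lam k :=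
  mul_pos (by positivity) <| gegIntegral_sq_pos (by linarith) <|
    ne_zero_of_degree_gt (n := ⊥) (by
      rw [degree_gegenbauer (fun k => by positivity)]; exact WithBot.bot_lt_coe k)

lemma gegIntegral_gegenbauerPrimitive_sq (hlam : -1 / 2 < lam) (n : ℕ) (S : ℕ → ℝ) :
    gegIntegral lam (gegenbauerPrimitive lam n S ^ 2) =
      ∑ m ∈ Finset.range n,
        gegenbauerWeight lam (m + 1) / (m + 1 + lam) * (S m - S (m + 2)) ^ 2 := by
  have horth : Pairwise fun i j : ℕ =>
      gegIntegral lam (gegenbauer lam (i + 1) * gegenbauer lam (j + 1)) = 0 := fun i j hij =>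
    gegIntegral_gegenbauer_mul_eq_zero hlam (by omega)
  rw [gegenbauerPrimitive, map_sum_smul_sq _ horth]
  refine Finset.sum_congr rfl fun m _ => ?_
  have hm : (m : ℝ) + 1 + lam ≠ 0 := by linarith [m.cast_nonneg (α := ℝ)]
  rw [gegenbauerWeight]
  push_cast
  field_simp

lemma gegIntegral_derivative_gegenbauerPrimitive_sq (hlam : -1 / 2 < lam) {n : ℕ} {S : ℕ → ℝ}
    (hS : ∀ m, n ≤ m → S m = 0) :
    gegIntegral lam (derivative (gegenbauerPrimitive lam n S) ^ 2) =
      ∑ m ∈ Finset.range n, 4 * (m + lam) * gegenbauerWeight lam m * S m ^ 2 := by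
  rw [derivative_gegenbauerPrimitive lam hS,
    map_sum_smul_sq _ fun _ _ hjk => gegIntegral_gegenbauer_mul_eq_zero hlam hjk]
  refine Finset.sum_congr rfl fun m _ => ?_
  rw [gegenbauerWeight]
  ring

lemma gegIntegral_gegenbauerPrimitive_sq_le (hlam : -1 / 2 < lam) (c : ℝ) (n : ℕ) (S : ℕ → ℝ) :
    gegIntegral lam (gegenbauerPrimitive lam n S ^ 2) ≤
      gegIntegral lam ((C c + gegenbauerPrimitive lam n S) ^ 2) := by
  have hmean : gegIntegral lam (gegenbauerPrimitive lam n S) = 0 := by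
    rw [gegenbauerPrimitive, map_sum]
    refine Finset.sum_eq_zero fun m _ => ?_
    have horth := gegIntegral_gegenbauer_mul_eq_zero hlam m.succ_ne_zero
    rw [show gegenbauer lam 0 = 1 from rfl, mul_one] at horth
    rw [map_smul, horth, smul_zero]
  have hexpand : (C c + gegenbauerPrimitive lam n S) ^ 2 =
      C c ^ 2 + (2 * c) • gegenbauerPrimitive lam n S + gegenbauerPrimitive lam n S ^ 2 := by
    rw [smul_eq_C_mul, map_mul, map_ofNat]; ring
  rw [hexpand, map_add, map_add, map_smul, hmean, smul_zero, add_zero]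
  exact le_add_of_nonneg_left (gegIntegral_sq_nonneg hlam (C c))

end Weight

section Riccati

variable {K : Type*} [Field K] [LinearOrder K] [IsStrictOrderedRing K]

lemma picone_le_sq_sub {r x y : K} (hr : 0 ≤ r) (hy : r = 0 → y = 0) :
    (1 - r) * x ^ 2 - (1 / r - 1) * y ^ 2 ≤ (x - y) ^ 2 := by
  rcases hr.eq_or_lt with rfl | hr
  · simp [hy rfl]
  · have hsquare : (x - y) ^ 2 - ((1 - r) * x ^ 2 - (1 / r - 1) * y ^ 2) = (r * x - y) ^ 2 / r := by
      field_simp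
      ring
    rw [← sub_nonneg, hsquare]
    positivity

/-- The numbers `r m` play the role of the quotients `φ (m + d) / φ m` of a positive supersolution
`φ` of the Euler–Lagrange equation. -/
lemma sum_mul_sq_le_sum_mul_sq_sub {n d : ℕ} {S V w r : ℕ → K} (hS : ∀ m, n ≤ m → S m = 0)
    (hw : ∀ m < n, 0 ≤ w m) (hr : ∀ m < n, 0 ≤ r m) (hr_pos : ∀ m, m + d < n → 0 < r m)
    (hinit : ∀ m < n, m < d → V m ≤ w m * (1 - r m))
    (hstep : ∀ m, m + d < n → V (m + d) ≤ w (m + d) * (1 - r (m + d)) - w m * (1 / r m - 1)) :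
    ∑ m ∈ Finset.range n, V m * S m ^ 2 ≤
      ∑ m ∈ Finset.range n, w m * (S m - S (m + d)) ^ 2 := by
  let T : ℕ → K := fun m => (if m < d then 0 else w (m - d) * (1 / r (m - d) - 1)) * S m ^ 2
  have hT : ∀ m, T (m + d) = w m * (1 / r m - 1) * S (m + d) ^ 2 := fun m => by
    simp only [T, Nat.add_sub_cancel, if_neg (Nat.le_add_left d m).not_gt]
  have hshift : ∑ m ∈ Finset.range n, T (m + d) = ∑ m ∈ Finset.range n, T m :=
    sum_range_add_eq_sum_range (fun m hm => by simp only [T, if_pos hm, zero_mul])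
      fun m hm => by simp only [T, hS m hm, zero_pow two_ne_zero, mul_zero]
  have hV : ∀ m < n, V m * S m ^ 2 ≤ w m * (1 - r m) * S m ^ 2 - T m := fun m hm => by
    rcases lt_or_ge m d with hmd | hmd
    · simpa only [T, if_pos hmd, zero_mul, sub_zero] using
        mul_le_mul_of_nonneg_right (hinit m hm hmd) (sq_nonneg (S m))
    · obtain ⟨k, rfl⟩ := Nat.exists_eq_add_of_le' hmd
      rw [hT, ← sub_mul]
      exact mul_le_mul_of_nonneg_right (hstep k hm) (sq_nonneg _)
  have hpicone : ∀ m < n, w m * (1 - r m) * S m ^ 2 - T (m + d) ≤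
      w m * (S m - S (m + d)) ^ 2 := fun m hm => by
    have hzero : r m = 0 → S (m + d) = 0 := fun h =>
      hS _ (not_lt.1 fun hmd => (hr_pos m hmd).ne' h)
    rw [hT, mul_assoc, mul_assoc, ← mul_sub]
    exact mul_le_mul_of_nonneg_left (picone_le_sq_sub (hr m hm) hzero) (hw m hm)
  calc ∑ m ∈ Finset.range n, V m * S m ^ 2
      ≤ ∑ m ∈ Finset.range n, (w m * (1 - r m) * S m ^ 2 - T m) :=
        Finset.sum_le_sum fun m hm => hV m (Finset.mem_range.1 hm)
    _ = ∑ m ∈ Finset.range n, (w m * (1 - r m) * S m ^ 2 - T (m + d)) := by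
        rw [Finset.sum_sub_distrib, Finset.sum_sub_distrib, hshift]
    _ ≤ ∑ m ∈ Finset.range n, w m * (S m - S (m + d)) ^ 2 :=
        Finset.sum_le_sum fun m hm => hpicone m (Finset.mem_range.1 hm)

end Riccati

section Hardy

variable {lam : ℝ}

/-- The quartic `((x + lam) ^ 2 - 1) * ((x + lam) ^ 2 - (lam - 1) ^ 2)`, in factored form; its value
at `n + 1` is the upper bound for `(lam + 2) * (lam + 3) * c_n(lam) ^ 2`. -/
def markovQuartic (lam x : ℝ) : ℝ := (x + 1) * (x + lam - 1) * (x + lam + 1) * (x + 2 * lam - 1)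

lemma markovQuartic_strictMonoOn (hlam : 2 ≤ lam) :
    StrictMonoOn (markovQuartic lam) (Set.Ici (-1)) := by
  intro x hx y _ hxy
  rw [Set.mem_Ici] at hx
  have h₁ : 0 ≤ x + 1 := by linarith
  have h₂ : 0 ≤ x + lam - 1 := by linarith
  have h₃ : 0 ≤ x + lam + 1 := by linarith
  have h₄ : 0 ≤ x + 2 * lam - 1 := by linarith
  exact mul_lt_mul'' (mul_lt_mul'' (mul_lt_mul'' (by linarith) (by linarith) h₁ h₂)
    (by linarith) (by positivity) h₃) (by linarith) (by positivity) h₄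

lemma markovQuartic_neg_one (lam : ℝ) : markovQuartic lam (-1) = 0 := by
  rw [markovQuartic, neg_add_cancel, zero_mul, zero_mul, zero_mul]

lemma markovQuartic_pos {x : ℝ} (hlam : 2 ≤ lam) (hx : -1 < x) : 0 < markovQuartic lam x :=
  (markovQuartic_neg_one lam).symm.trans_lt <|
    markovQuartic_strictMonoOn hlam Set.self_mem_Ici hx.le hx

lemma markovQuartic_natCast_strictMono (hlam : 2 ≤ lam) :
    StrictMono fun m : ℕ => markovQuartic lam m := fun j k hjk =>
  have hmem : ∀ m : ℕ, (m : ℝ) ∈ Set.Ici (-1) := fun m =>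
    Set.mem_Ici.2 (neg_one_lt_zero.le.trans m.cast_nonneg)
  markovQuartic_strictMonoOn hlam (hmem j) (hmem k) (Nat.cast_lt.2 hjk)

/-- The quotient `φ (x + 2) / φ x` of the supersolution `φ = ψ * (N - markovQuartic lam)`, where
`ψ (x + 2) / ψ x = (x + 3) / (x + 2 * lam - 1)`. For `N = markovQuartic lam (n + 1)` it is positive
up to `x = n - 2` and vanishes at `x = n - 1`. -/
noncomputable def markovRatio (lam N x : ℝ) : ℝ :=
  (x + 3) * (N - markovQuartic lam (x + 2)) / ((x + 2 * lam - 1) * (N - markovQuartic lam x))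

lemma mul_markovQuartic_mul_le {N x : ℝ} (hlam : 2 ≤ lam) (hx : 0 ≤ x)
    (hN : markovQuartic lam x < N) :
    4 * (lam + 2) * (lam + 3) / N * (x + lam) * markovQuartic lam x * (N - markovQuartic lam x) ≤
      (x + lam - 1) * (x + 2 * lam) * ((x + 2 * lam - 1) * (N - markovQuartic lam x) -
        (x + 3) * (N - markovQuartic lam (x + 2))) -
      x * (x + lam + 1) * ((x + 2 * lam - 3) * (N - markovQuartic lam (x - 2)) -
        (x + 1) * (N - markovQuartic lam x)) := by
  have hright : (x + lam - 1) * (x + 2 * lam) * ((x + 2 * lam - 1) * (N - markovQuartic lam x) -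
        (x + 3) * (N - markovQuartic lam (x + 2))) -
      x * (x + lam + 1) * ((x + 2 * lam - 3) * (N - markovQuartic lam (x - 2)) -
        (x + 1) * (N - markovQuartic lam x)) =
      (x + lam) * (4 * (lam - 1) * (lam - 2) * (N - markovQuartic lam x) +
        80 * markovQuartic lam x + (24 * lam ^ 2 - 16 * lam + 128) * ((x + lam) ^ 2 - 1)) := by
    simp only [markovQuartic]; ring
  have hP : 0 ≤ markovQuartic lam x := (markovQuartic_pos hlam (by linarith)).le
  rw [hright]
  generalize markovQuartic lam x = P at hN hP ⊢
  obtain ⟨Q, rfl⟩ : ∃ Q, N = P + Q := ⟨N - P, by ring⟩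
  rw [add_sub_cancel_left]
  have hremainder : 0 ≤ (24 * lam ^ 2 - 16 * lam + 128) * ((x + lam) ^ 2 - 1) := by
    apply mul_nonneg <;> nlinarith
  have hmain : 4 * (lam + 2) * (lam + 3) * P * Q / (P + Q) ≤
      4 * (lam - 1) * (lam - 2) * Q + 80 * P := by
    have hsquares : (4 * (lam - 1) * (lam - 2) * Q + 80 * P) * (P + Q) -
        4 * (lam + 2) * (lam + 3) * P * Q =
        4 * ((lam - 2) * Q - 4 * P) ^ 2 + 16 * P ^ 2 + 4 * ((lam - 2) * Q ^ 2) := by ring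
    have : 0 ≤ lam - 2 := sub_nonneg.2 hlam
    rw [div_le_iff₀ (hP.trans_lt hN), ← sub_nonneg, hsquares]
    positivity
  calc 4 * (lam + 2) * (lam + 3) / (P + Q) * (x + lam) * P * Q
      = (x + lam) * (4 * (lam + 2) * (lam + 3) * P * Q / (P + Q)) := by ring
    _ ≤ _ := mul_le_mul_of_nonneg_left (by linarith) (by linarith)

lemma markovRatio_riccati {N x : ℝ} (hlam : 2 ≤ lam) (hx : 0 ≤ x) (hN : markovQuartic lam x < N) :
    4 * (lam + 2) * (lam + 3) / N * (x + lam) ≤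
      (x + 2 * lam) / ((x + 1) * (x + lam + 1)) * (1 - markovRatio lam N x) -
      x / ((x + 2 * lam - 1) * (x + lam - 1)) * (1 / markovRatio lam N (x - 2) - 1) := by
  have h₁ : 0 < x + lam - 1 := by linarith
  have h₂ : 0 < x + 2 * lam - 1 := by linarith
  have hQ : 0 < N - markovQuartic lam x := sub_pos.2 hN
  have hP : 0 < markovQuartic lam x := markovQuartic_pos hlam (by linarith)
  have hcore := div_le_div_of_nonneg_right (mul_markovQuartic_mul_le hlam hx hN)
    (mul_pos hP hQ).le
  rw [mul_assoc (_ * _), mul_div_cancel_right₀ _ (mul_pos hP hQ).ne'] at hcore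
  refine hcore.trans_eq ?_
  rw [markovRatio, markovRatio, one_div_div, sub_add_cancel, show x - 2 + 3 = x + 1 by ring,
    show x - 2 + 2 * lam - 1 = x + 2 * lam - 3 by ring]
  generalize N - markovQuartic lam x = Q, N - markovQuartic lam (x + 2) = Q₂,
    N - markovQuartic lam (x - 2) = Q₀ at hQ ⊢
  rw [markovQuartic]
  generalize x + 2 * lam - 1 = a at h₂ ⊢
  field_simp

lemma markovRatio_nonneg {N x : ℝ} (hlam : 2 ≤ lam) (hx : 0 ≤ x) (hN : markovQuartic lam x ≤ N)
    (hN₂ : markovQuartic lam (x + 2) ≤ N) : 0 ≤ markovRatio lam N x :=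
  div_nonneg (mul_nonneg (by linarith) (sub_nonneg.2 hN₂))
    (mul_nonneg (by linarith) (sub_nonneg.2 hN))

lemma markovRatio_pos {N x : ℝ} (hlam : 2 ≤ lam) (hx : 0 ≤ x) (hN : markovQuartic lam x < N)
    (hN₂ : markovQuartic lam (x + 2) < N) : 0 < markovRatio lam N x :=
  div_pos (mul_pos (by linarith) (sub_pos.2 hN₂)) (mul_pos (by linarith) (sub_pos.2 hN))

lemma one_le_one_div_markovRatio_neg_one {N : ℝ} (hlam : 2 ≤ lam) (hN : markovQuartic lam 1 < N) :
    1 ≤ 1 / markovRatio lam N (-1) := by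
  have hone : 0 ≤ markovQuartic lam 1 := (markovQuartic_pos hlam (by norm_num)).le
  rw [markovRatio, one_div_div, markovQuartic_neg_one, show (-1 : ℝ) + 2 = 1 by norm_num,
    one_le_div (mul_pos (by norm_num) (sub_pos.2 hN))]
  gcongr
  · linarith
  · linarith

variable {g : ℕ → ℝ} {N : ℝ}

lemma weight_riccati (hlam : 2 ≤ lam) (hpos : ∀ k, 0 < g k)
    (hg : ∀ k : ℕ, (k + 1) * g (k + 1) = (k + 2 * lam) * g k) {m : ℕ}
    (hN : markovQuartic lam m < N) :
    4 * (lam + 2) * (lam + 3) / N * (m + lam) * g m ≤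
      g (m + 1) / (m + 1 + lam) * (1 - markovRatio lam N m) -
      m / ((m + 2 * lam - 1) * (m + lam - 1)) * g m * (1 / markovRatio lam N (m - 2) - 1) := by
  have hsucc : g (m + 1) / (m + 1 + lam) = (m + 2 * lam) / ((m + 1) * (m + lam + 1)) * g m := by
    rw [eq_div_of_mul_eq (by positivity) ((mul_comm _ _).trans (hg m)), add_right_comm (m : ℝ)]
    field_simp
  refine (mul_le_mul_of_nonneg_right (markovRatio_riccati hlam m.cast_nonneg hN)
    (hpos m).le).trans_eq ?_
  rw [hsucc]
  ring

lemma weight_riccati_init (hlam : 2 ≤ lam) (hpos : ∀ k, 0 < g k)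
    (hg : ∀ k : ℕ, (k + 1) * g (k + 1) = (k + 2 * lam) * g k) {m : ℕ} (hm : m < 2)
    (hN : markovQuartic lam m < N) :
    4 * (lam + 2) * (lam + 3) / N * (m + lam) * g m ≤
      g (m + 1) / (m + 1 + lam) * (1 - markovRatio lam N m) := by
  refine (weight_riccati hlam hpos hg hN).trans (sub_le_self _ ?_)
  obtain rfl | rfl : m = 0 ∨ m = 1 := by omega
  · simp
  · push_cast at hN ⊢
    have hratio := one_le_one_div_markovRatio_neg_one hlam hN
    rw [show (1 : ℝ) - 2 = -1 by norm_num]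
    have h₁ : 0 < 1 + 2 * lam - 1 := by linarith
    have h₂ : 0 < 1 + lam - 1 := by linarith
    have := hpos 1
    exact mul_nonneg (by positivity) (sub_nonneg.2 hratio)

lemma weight_riccati_step (hlam : 2 ≤ lam) (hpos : ∀ k, 0 < g k)
    (hg : ∀ k : ℕ, (k + 1) * g (k + 1) = (k + 2 * lam) * g k) {m : ℕ}
    (hN : markovQuartic lam (m + 2) < N) :
    4 * (lam + 2) * (lam + 3) / N * (m + 2 + lam) * g (m + 2) ≤
      g (m + 2 + 1) / (m + 2 + 1 + lam) * (1 - markovRatio lam N (m + 2)) -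
      g (m + 1) / (m + 1 + lam) * (1 / markovRatio lam N m - 1) := by
  have hpred : ((m : ℝ) + 2) / ((m + 2 + 2 * lam - 1) * (m + 2 + lam - 1)) * g (m + 2) =
      g (m + 1) / (m + 1 + lam) := by
    have hrec := hg (m + 1)
    push_cast at hrec
    rw [show (m : ℝ) + 2 + 2 * lam - 1 = m + 1 + 2 * lam by ring,
      show (m : ℝ) + 2 + lam - 1 = m + 1 + lam by ring]
    field_simp
    linear_combination hrec
  have hriccati := weight_riccati (m := m + 2) hlam hpos hg (by exact_mod_cast hN)
  push_cast at hriccati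
  rwa [hpred, add_sub_cancel_right] at hriccati

lemma sum_weight_mul_sq_le (hlam : 2 ≤ lam) (hpos : ∀ k, 0 < g k)
    (hg : ∀ k : ℕ, (k + 1) * g (k + 1) = (k + 2 * lam) * g k) {n : ℕ} {S : ℕ → ℝ}
    (hS : ∀ m, n ≤ m → S m = 0) :
    ∑ m ∈ Finset.range n, 4 * (m + lam) * g m * S m ^ 2 ≤
      markovQuartic lam (n + 1) / ((lam + 2) * (lam + 3)) *
        ∑ m ∈ Finset.range n, g (m + 1) / (m + 1 + lam) * (S m - S (m + 2)) ^ 2 := by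
  have hmono := markovQuartic_natCast_strictMono hlam
  rw [← Nat.cast_succ]
  set N := markovQuartic lam (n.succ : ℝ)
  have hN_pos : 0 < N := markovQuartic_pos hlam (neg_one_lt_zero.trans (by positivity))
  have hhardy := sum_mul_sq_le_sum_mul_sq_sub (d := 2) (w := fun m => g (m + 1) / (m + 1 + lam))
    (r := fun m => markovRatio lam N m)
    (V := fun m => 4 * (lam + 2) * (lam + 3) / N * (m + lam) * g m) hS
    (fun m _ => div_nonneg (hpos _).le (by positivity))
    (fun m hm => markovRatio_nonneg hlam m.cast_nonneg (hmono.monotone (by omega))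
      (by exact_mod_cast hmono.monotone (by omega : m + 2 ≤ n.succ)))
    (fun m hm => markovRatio_pos hlam m.cast_nonneg (hmono (by omega))
      (by exact_mod_cast hmono (by omega : m + 2 < n.succ)))
    (fun m hm hm₂ => weight_riccati_init hlam hpos hg hm₂ (hmono (by omega)))
    (fun m hm => by
      push_cast
      exact weight_riccati_step hlam hpos hg
        (by exact_mod_cast hmono (by omega : m + 2 < n.succ)))
  rw [div_mul_eq_mul_div, le_div_iff₀ (by positivity)]
  calc (∑ m ∈ Finset.range n, 4 * (m + lam) * g m * S m ^ 2) * ((lam + 2) * (lam + 3))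
      = N * ∑ m ∈ Finset.range n, 4 * (lam + 2) * (lam + 3) / N * (m + lam) * g m * S m ^ 2 := by
        rw [Finset.sum_mul, Finset.mul_sum]
        refine Finset.sum_congr rfl fun m _ => ?_
        field_simp
    _ ≤ _ := mul_le_mul_of_nonneg_left hhardy hN_pos.le

end Hardy

section TestSequence

variable {lam : ℝ} {g : ℕ → ℝ}

lemma sum_weight_eq (hlam : 0 < lam) (hg : ∀ k : ℕ, (k + 1) * g (k + 1) = (k + 2 * lam) * g k)
    (n : ℕ) :
    ∑ m ∈ Finset.range n, (m + lam) * g m =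
      n * (2 * n + 2 * lam - 1) / (2 * (2 * lam + 1)) * g n := by
  induction n with
  | zero => simp
  | succ n ih =>
    rw [Finset.sum_range_succ, ih]
    have hrec := eq_div_of_mul_eq (by positivity) ((mul_comm _ _).trans (hg n))
    push_cast
    rw [hrec]
    field_simp
    ring

lemma sum_weight_mul_sq_eq (hlam : 0 < lam)
    (hg : ∀ k : ℕ, (k + 1) * g (k + 1) = (k + 2 * lam) * g k) (b : ℝ) (n : ℕ) :
    ∑ m ∈ Finset.range n, (m + lam) * g m * (b - m * (m + 2 * lam)) ^ 2 =
      n * (2 * n + 2 * lam - 1) / 2 * (b ^ 2 / (2 * lam + 1)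
        - (2 * b - (2 * lam + 1)) * ((n - 1) * (n + 2 * lam)) / (2 * lam + 3)
        + (n - 2) * (n - 1) * (n + 2 * lam + 1) * (n + 2 * lam) / (2 * lam + 5)) * g n := by
  induction n with
  | zero => simp
  | succ n ih =>
    rw [Finset.sum_range_succ, ih]
    have hrec := eq_div_of_mul_eq (by positivity) ((mul_comm _ _).trans (hg n))
    push_cast
    rw [hrec]
    field_simp
    ring

/-- The test sequence for the lower bound: the gap between the eigenvalues of index `n` and `m` of
the Gegenbauer operator, cut off at `n`. -/
noncomputable def markovTest (lam : ℝ) (n m : ℕ) : ℝ :=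
  if m < n then n * (n + 2 * lam) - m * (m + 2 * lam) else 0

lemma markovTest_of_le {n m : ℕ} (h : n ≤ m) : markovTest lam n m = 0 := if_neg h.not_gt

lemma markovTest_of_lt {n m : ℕ} (h : m < n) :
    markovTest lam n m = n * (n + 2 * lam) - m * (m + 2 * lam) := if_pos h

lemma markovTest_sub {n m : ℕ} (h : m + 2 ≤ n) :
    markovTest lam n m - markovTest lam n (m + 2) = 4 * (m + 1 + lam) := by
  rw [markovTest_of_lt (by omega)]
  rcases h.eq_or_lt with rfl | h
  · rw [markovTest_of_le le_rfl]; push_cast; ring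
  · rw [markovTest_of_lt h]; push_cast; ring

lemma sum_weight_mul_markovTest_sub_sq_le (hlam : 0 < lam) (hpos : ∀ k, 0 < g k)
    (hg : ∀ k : ℕ, (k + 1) * g (k + 1) = (k + 2 * lam) * g k) {n : ℕ} (hn : 1 ≤ n) :
    ∑ m ∈ Finset.range n,
        g (m + 1) / (m + 1 + lam) * (markovTest lam n m - markovTest lam n (m + 2)) ^ 2 ≤
      (2 * n + 2 * lam - 1) * (8 * n / (2 * lam + 1) + (2 * n + 2 * lam - 1) / (n + lam)) *
        g n := by
  obtain ⟨k, rfl⟩ := Nat.exists_eq_add_of_le' hn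
  have hlast :
      markovTest lam (k + 1) k - markovTest lam (k + 1) (k + 2) = 2 * k + 1 + 2 * lam := by
    rw [markovTest_of_lt k.lt_succ_self, markovTest_of_le (k + 1).le_succ]; push_cast; ring
  have hterm : ∀ m ∈ Finset.range k, g (m + 1) / (m + 1 + lam) *
      (markovTest lam (k + 1) m - markovTest lam (k + 1) (m + 2)) ^ 2 =
        16 * (((m + 1 : ℕ) + lam) * g (m + 1)) := fun m hm => by
    rw [markovTest_sub (by have := Finset.mem_range.1 hm; omega)]
    push_cast
    field_simp
    ring
  have hsum := sum_weight_eq hlam hg (k + 1)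
  rw [Finset.sum_range_succ'] at hsum
  have hzero : 0 < (((0 : ℕ) : ℝ) + lam) * g 0 := mul_pos (by simpa using hlam) (hpos 0)
  rw [Finset.sum_range_succ, Finset.sum_congr rfl hterm, ← Finset.mul_sum, hlast,
    eq_sub_of_add_eq hsum]
  push_cast at hzero ⊢
  calc _ ≤ 16 * (((k : ℝ) + 1) * (2 * (k + 1) + 2 * lam - 1) / (2 * (2 * lam + 1)) * g (k + 1)) +
        g (k + 1) / (k + 1 + lam) * (2 * k + 1 + 2 * lam) ^ 2 := by linarith
    _ = _ := by field_simp; ring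

lemma markovTest_ratio_lt {x : ℝ} (hlam : 0 < lam) (hx : 1 ≤ x) :
    x ^ 2 * (x + lam) ^ 2 / (4 * (lam + 1) * (lam + 2)) *
        ((2 * x + 2 * lam - 1) * (8 * x / (2 * lam + 1) + (2 * x + 2 * lam - 1) / (x + lam))) <
      4 * (x * (2 * x + 2 * lam - 1) / 2 * ((x * (x + 2 * lam)) ^ 2 / (2 * lam + 1)
        - (2 * (x * (x + 2 * lam)) - (2 * lam + 1)) * ((x - 1) * (x + 2 * lam)) / (2 * lam + 3)
        + (x - 2) * (x - 1) * (x + 2 * lam + 1) * (x + 2 * lam) / (2 * lam + 5))) := by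
  obtain ⟨i, rfl⟩ : ∃ i, x = i + 1 := ⟨x - 1, by ring⟩
  have hi : 0 ≤ i := by linarith
  rw [← sub_pos]
  field_simp
  ring_nf
  positivity

lemma mul_sum_weight_mul_markovTest_sub_sq_lt (hlam : 0 < lam) (hpos : ∀ k, 0 < g k)
    (hg : ∀ k : ℕ, (k + 1) * g (k + 1) = (k + 2 * lam) * g k) {n : ℕ} (hn : 1 ≤ n) :
    (n : ℝ) ^ 2 * (n + lam) ^ 2 / (4 * (lam + 1) * (lam + 2)) *
        ∑ m ∈ Finset.range n,
          g (m + 1) / (m + 1 + lam) * (markovTest lam n m - markovTest lam n (m + 2)) ^ 2 <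
      ∑ m ∈ Finset.range n, 4 * (m + lam) * g m * markovTest lam n m ^ 2 := by
  have hright : ∑ m ∈ Finset.range n, 4 * (m + lam) * g m * markovTest lam n m ^ 2 =
      4 * ∑ m ∈ Finset.range n, (m + lam) * g m * (n * (n + 2 * lam) - m * (m + 2 * lam)) ^ 2 := by
    rw [Finset.mul_sum]
    refine Finset.sum_congr rfl fun m hm => ?_
    rw [markovTest_of_lt (Finset.mem_range.1 hm)]
    ring
  rw [hright, sum_weight_mul_sq_eq hlam hg]
  have hleft := sum_weight_mul_markovTest_sub_sq_le hlam hpos hg hn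
  refine (mul_le_mul_of_nonneg_left hleft (by positivity)).trans_lt ?_
  rw [← mul_assoc _ _ (g n), ← mul_assoc 4 _ (g n)]
  exact mul_lt_mul_of_pos_right (markovTest_ratio_lt hlam (Nat.one_le_cast.2 hn)) (hpos n)

end TestSequence

section Markov

variable {lam : ℝ} {n : ℕ}

lemma markovQuartic_add_one_lt (hlam : 0 ≤ lam) (hn : 1 ≤ n) :
    markovQuartic lam (n + 1) < n * (n + 2 * lam + 2) ^ 3 := by
  obtain ⟨k, rfl⟩ := Nat.exists_eq_add_of_le' hn
  rw [← sub_pos]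
  unfold markovQuartic
  push_cast
  ring_nf
  positivity

lemma gegIntegral_derivative_sq_le (hlam : 2 ≤ lam) {p : ℝ[X]} (hp : p.natDegree ≤ n) :
    gegIntegral lam (derivative p ^ 2) ≤
      markovQuartic lam (n + 1) / ((lam + 2) * (lam + 3)) * gegIntegral lam (p ^ 2) := by
  have hlam₀ : 0 < lam := by linarith
  have hlam₁ : -1 / 2 < lam := by linarith
  obtain ⟨c, S, hS, rfl⟩ := exists_eq_C_add_gegenbauerPrimitive (fun k => by positivity) hp
  have hquartic : 0 < markovQuartic lam (n + 1) :=
    markovQuartic_pos hlam (neg_one_lt_zero.trans (by positivity))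
  rw [derivative_add, derivative_C, zero_add,
    gegIntegral_derivative_gegenbauerPrimitive_sq hlam₁ hS]
  refine (sum_weight_mul_sq_le hlam (gegenbauerWeight_pos hlam₀) (gegenbauerWeight_succ hlam₁)
    hS).trans ?_
  rw [← gegIntegral_gegenbauerPrimitive_sq hlam₁]
  exact mul_le_mul_of_nonneg_left (gegIntegral_gegenbauerPrimitive_sq_le hlam₁ c n S)
    (by positivity)

lemma exists_lt_gegIntegral_derivative_sq (hlam : 0 < lam) (hn : 1 ≤ n) :
    ∃ p : ℝ[X], p.natDegree ≤ n ∧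
      (n : ℝ) ^ 2 * (n + lam) ^ 2 / (4 * (lam + 1) * (lam + 2)) * gegIntegral lam (p ^ 2) <
        gegIntegral lam (derivative p ^ 2) := by
  have hlam₁ : -1 / 2 < lam := by linarith
  refine ⟨gegenbauerPrimitive lam n (markovTest lam n), natDegree_gegenbauerPrimitive_le _ _ _, ?_⟩
  rw [gegIntegral_gegenbauerPrimitive_sq hlam₁,
    gegIntegral_derivative_gegenbauerPrimitive_sq hlam₁ fun m hm => markovTest_of_le hm]
  exact mul_sum_weight_mul_markovTest_sub_sq_lt hlam (gegenbauerWeight_pos hlam)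
    (gegenbauerWeight_succ hlam₁) hn

lemma gegNorm_eval (hlam : -1 / 2 < lam) (p : ℝ[X]) :
    gegNorm lam (fun x => p.eval x) = √(gegIntegral lam (p ^ 2)) := by
  simp only [gegNorm, Real.sqrt_eq_rpow, gegIntegral_apply hlam, eval_pow]

lemma gegNorm_derivative_div_le (hlam : -1 / 2 < lam) {K : ℝ} {p : ℝ[X]}
    (hp : gegIntegral lam (derivative p ^ 2) ≤ K * gegIntegral lam (p ^ 2)) :
    gegNorm lam (fun x => (derivative p).eval x) / gegNorm lam (fun x => p.eval x) ≤ √K := by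
  rw [gegNorm_eval hlam, gegNorm_eval hlam]
  refine div_le_of_le_mul₀ (Real.sqrt_nonneg _) (Real.sqrt_nonneg _) ?_
  rw [← Real.sqrt_mul' _ (gegIntegral_sq_nonneg hlam p)]
  exact Real.sqrt_le_sqrt hp

lemma markovConst_sq_le (hlam : -1 / 2 < lam) {K : ℝ} (hK : 0 ≤ K)
    (h : ∀ p : ℝ[X], p.natDegree ≤ n →
      gegIntegral lam (derivative p ^ 2) ≤ K * gegIntegral lam (p ^ 2)) :
    markovConst lam n ^ 2 ≤ K := by
  have hle : markovConst lam n ≤ √K := Real.sSup_le (by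
    rintro r ⟨p, -, hp, rfl⟩
    exact gegNorm_derivative_div_le hlam (h p hp)) (Real.sqrt_nonneg K)
  have hnonneg : 0 ≤ markovConst lam n := Real.sSup_nonneg (by
    rintro r ⟨p, -, -, rfl⟩
    rw [gegNorm_eval hlam, gegNorm_eval hlam]
    positivity)
  exact (Real.le_sqrt hnonneg hK).1 hle

lemma lt_markovConst_sq (hlam : -1 / 2 < lam) {K c : ℝ}
    (h : ∀ p : ℝ[X], p.natDegree ≤ n →
      gegIntegral lam (derivative p ^ 2) ≤ K * gegIntegral lam (p ^ 2))
    {p : ℝ[X]} (hp : p.natDegree ≤ n)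
    (hc : c * gegIntegral lam (p ^ 2) < gegIntegral lam (derivative p ^ 2)) :
    c < markovConst lam n ^ 2 := by
  have hp₀ : p ≠ 0 := by
    rintro rfl
    simp at hc
  have hquotient : √(gegIntegral lam (derivative p ^ 2)) / √(gegIntegral lam (p ^ 2)) ≤
      markovConst lam n := by
    refine le_csSup ⟨√K, ?_⟩ ⟨p, hp₀, hp, by rw [gegNorm_eval hlam, gegNorm_eval hlam]⟩
    rintro r ⟨q, -, hq, rfl⟩
    exact gegNorm_derivative_div_le hlam (h q hq)
  refine lt_of_lt_of_le ?_ (pow_le_pow_left₀ (by positivity) hquotient 2)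
  rw [div_pow, Real.sq_sqrt (gegIntegral_sq_nonneg hlam _),
    Real.sq_sqrt (gegIntegral_sq_nonneg hlam p), lt_div_iff₀ (gegIntegral_sq_pos hlam hp₀)]
  exact hc

end Markov

theorem markov_bounds_large_lambda_general (lam : ℝ) (hlam : 2 ≤ lam) (n : ℕ) (hn : 1 ≤ n) :
    (n : ℝ) ^ 2 * (n + lam) ^ 2 / (4 * (lam + 1) * (lam + 2)) < markovConst lam n ^ 2 ∧
    markovConst lam n ^ 2 < n * (n + 2 * lam + 2) ^ 3 / ((lam + 2) * (lam + 3)) := by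
  have hlam₁ : -1 / 2 < lam := by linarith
  have hupper : ∀ p : ℝ[X], p.natDegree ≤ n → gegIntegral lam (derivative p ^ 2) ≤
      markovQuartic lam (n + 1) / ((lam + 2) * (lam + 3)) * gegIntegral lam (p ^ 2) :=
    fun p hp => gegIntegral_derivative_sq_le hlam hp
  have hquartic : 0 < markovQuartic lam (n + 1) :=
    markovQuartic_pos hlam (neg_one_lt_zero.trans (by positivity))
  constructor
  · obtain ⟨p, hp, hlt⟩ :=
      exists_lt_gegIntegral_derivative_sq (lam := lam) (by linarith) hn
    exact lt_markovConst_sq hlam₁ hupper hp hlt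
  · calc markovConst lam n ^ 2
        ≤ markovQuartic lam (n + 1) / ((lam + 2) * (lam + 3)) :=
          markovConst_sq_le hlam₁ (by positivity) hupper
      _ < n * (n + 2 * lam + 2) ^ 3 / ((lam + 2) * (lam + 3)) :=
          div_lt_div_of_pos_right (markovQuartic_add_one_lt (by linarith) hn) (by positivity)

theorem markov_bounds_large_lambda (lam : ℝ) (hlam : 2 ≤ lam) (n : ℕ) (hn : 3 ≤ n) :
    (n : ℝ)^2 * ((n : ℝ) + lam)^2 / (4 * (lam + 1) * (lam + 2)) < (markovConst lam n)^2 ∧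
    (markovConst lam n)^2 < (n : ℝ) * ((n : ℝ) + 2*lam + 2)^3 / ((lam + 2) * (lam + 3)) :=
  markov_bounds_large_lambda_general lam hlam n (by omega)
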